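/- arXiv:2111.00936 — 4 statements merged into one kernel-verified Lean document; each statement's English description precedes it below -/
import Mathlib

section
/- Let ω > 0, β > 0, g ∈ ℝ and t ∈ ℝ, and set n_c = 1/(βω). Then the Gaussian average of the semi-classical interferometric phase satisfies ∫∫_{ℝ²} (βω/(2π)) · exp(−(βω/2)(x₀² + p₀²)) · exp(−2√2·i·(g/ω)·(x₀·sin(ωt) + p₀·(1 − cos(ωt)))) dx₀ dp₀ = exp(−16·n_c·(g²/ω²)·sin²(ωt/2)). In particular the average is real, and its absolute value equals exp(−16·n_c·(g²/ω²)·sin²(ωt/2)), reproducing the periodic collapse and revival of the interferometric visibility with period 2π/ω. -/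
open Real MeasureTheory

/-- Semi-classical model 1: the thermal (Boltzmann) average of the interferometric
phase factor `e^{iφ(t)}` with `φ(t) = −2√2 (g/ω)(x₀ sin ωt + p₀ (1 − cos ωt))`
equals `exp(−16 n_c (g²/ω²) sin²(ωt/2))` with `n_c = 1/(βω)`, reproducing the
periodic collapse and revival of the interferometric visibility. -/
theorem gaussian_thermal_average_phase_model1
    (ω β g t : ℝ) (hω : 0 < ω) (hβ : 0 < β) :
    (∫ x₀ : ℝ, ∫ p₀ : ℝ,
        ((β * ω / (2 * π) * Real.exp (-(β * ω / 2) * (x₀ ^ 2 + p₀ ^ 2)) : ℝ) : ℂ) *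
          Complex.exp (Complex.I *
            ((-(2 * Real.sqrt 2) * (g / ω) *
              (x₀ * Real.sin (ω * t) + p₀ * (1 - Real.cos (ω * t))) : ℝ) : ℂ)))
      = ((Real.exp (-16 * (1 / (β * ω)) * (g ^ 2 / ω ^ 2) * Real.sin (ω * t / 2) ^ 2) : ℝ) : ℂ) := by
  have hb : 0 < β * ω / 2 := by positivity
  have hbre : 0 < (((β * ω / 2 : ℝ) : ℂ)).re := by simpa only [Complex.ofReal_re] using hb
  have key : ∀ a : ℝ, ∫ x : ℝ, Complex.exp (Complex.I * (a : ℂ) * x) *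
      Complex.exp (-((β * ω / 2 : ℝ) : ℂ) * x ^ 2) =
      ((π : ℂ) / ((β * ω / 2 : ℝ) : ℂ)) ^ (1 / 2 : ℂ) *
        Complex.exp (-(a : ℂ) ^ 2 / (4 * ((β * ω / 2 : ℝ) : ℂ))) :=
    fun a => fourierIntegral_gaussian hbre a
  have hsplit : ∀ x p : ℝ,
      ((β * ω / (2 * π) * Real.exp (-(β * ω / 2) * (x ^ 2 + p ^ 2)) : ℝ) : ℂ) *
          Complex.exp (Complex.I *
            ((-(2 * Real.sqrt 2) * (g / ω) *
              (x * Real.sin (ω * t) + p * (1 - Real.cos (ω * t))) : ℝ) : ℂ))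
      = (((β * ω / (2 * π) : ℝ) : ℂ) *
        (Complex.exp (Complex.I * ((-(2 * Real.sqrt 2) * (g / ω) * Real.sin (ω * t) : ℝ) : ℂ) * x) *
          Complex.exp (-((β * ω / 2 : ℝ) : ℂ) * x ^ 2))) *
        (Complex.exp (Complex.I *
            ((-(2 * Real.sqrt 2) * (g / ω) * (1 - Real.cos (ω * t)) : ℝ) : ℂ) * p) *
          Complex.exp (-((β * ω / 2 : ℝ) : ℂ) * p ^ 2)) := by
    intro x p
    rw [Complex.ofReal_mul (β * ω / (2 * π)), Complex.ofReal_exp]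
    simp only [mul_assoc, ← Complex.exp_add]
    congr 2
    push_cast
    ring
  simp_rw [hsplit, integral_const_mul, integral_mul_const, integral_const_mul, key]
  have hC : ((π : ℂ) / ((β * ω / 2 : ℝ) : ℂ)) ^ (1 / 2 : ℂ) *
      ((π : ℂ) / ((β * ω / 2 : ℝ) : ℂ)) ^ (1 / 2 : ℂ) = ((π / (β * ω / 2) : ℝ) : ℂ) := by
    have h0 : (π : ℂ) / ((β * ω / 2 : ℝ) : ℂ) ≠ 0 := by
      rw [← Complex.ofReal_div]
      exact Complex.ofReal_ne_zero.mpr (by positivity)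
    rw [← Complex.cpow_add _ _ h0]
    norm_num
  rw [show ∀ a b c d : ℂ, (a * (b * c)) * (b * d) = a * (b * b) * (c * d) by intros; ring, hC,
    ← Complex.exp_add, ← Complex.ofReal_mul,
    show β * ω / (2 * π) * (π / (β * ω / 2)) = 1 by field_simp, Complex.ofReal_one, one_mul,
    Complex.ofReal_exp]
  congr 1
  norm_cast
  have h2 : Real.sqrt 2 ^ 2 = 2 := Real.sq_sqrt (by norm_num)
  have hs : Real.sin (ω * t / 2) ^ 2 = (1 - Real.cos (ω * t)) / 2 := by
    rw [Real.sin_sq_eq_half_sub]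
    ring_nf
  have hsc := Real.sin_sq (ω * t)
  rw [hs]
  simp only [mul_pow, neg_sq, h2, hsc, div_pow]
  simp only [Int.cast_negSucc]
  push_cast
  field_simp
  ring
end

section
/- Let ω > 0, g ∈ ℝ, t ∈ ℝ and s > 0. Let X₁ and X₂ be independent real Gaussian random variables on a probability space, each with mean 0 and variance s, and set φ = 4√2·(g/ω)·sin(ωt/2)·(sin(ωt)·X₁ + cos(ωt)·X₂). Then E[e^{iφ}] = exp(−16·(g²/ω²)·s·sin²(ωt/2)). In particular its modulus equals the quantum interference visibility exp(−16·(g²/ω²)·(ñ + 1/2)·sin²(ωt/2)) when s = ñ + 1/2. -/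
open Real MeasureTheory ProbabilityTheory

theorem gaussian_neZero_aux (v : NNReal) : NeZero (gaussianReal 0 v) := inferInstance

/-- Characteristic function of a centred Gaussian random variable. -/
theorem gaussian_phase_aux {Ω : Type*} [MeasurableSpace Ω] (μ : Measure Ω) (X : Ω → ℝ)
    (s : ℝ) (hs : 0 ≤ s) (hX : AEMeasurable X μ)
    (h : μ.map X = gaussianReal 0 ⟨s, hs⟩) (c : ℝ) :
    (∫ a, Complex.exp (c * (X a : ℂ) * Complex.I) ∂μ) = Complex.exp (-(s * c ^ 2 / 2)) := by
  have h1 := charFun_gaussianReal (μ := 0) (v := ⟨s, hs⟩) c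
  rw [← h, charFun_apply_real, integral_map hX (by fun_prop)] at h1
  rw [h1]
  simp
  rfl

/-- Semi-classical model 3: for two independent Gaussian random variables `X₁, X₂`
with mean 0 and variance `s`, the characteristic-function average of the phase
`φ = 4√2 (g/ω) sin(ωt/2)(sin(ωt) X₁ + cos(ωt) X₂)` equals
`exp(−16 (g²/ω²) s sin²(ωt/2))`, the quantum interference visibility at `s = ñ + 1/2`. -/
theorem expectation_phase_model3 (ω g t s : ℝ) (hω : 0 < ω) (hs : 0 < s)
    {Ω : Type*} [MeasurableSpace Ω] (μ : Measure Ω) [IsProbabilityMeasure μ]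
    (X₁ X₂ : Ω → ℝ)
    (h₁ : μ.map X₁ = gaussianReal 0 ⟨s, hs.le⟩)
    (h₂ : μ.map X₂ = gaussianReal 0 ⟨s, hs.le⟩)
    (hindep : IndepFun X₁ X₂ μ) :
    (∫ a, Complex.exp (Complex.I *
        ((4 * Real.sqrt 2 * (g / ω) * Real.sin (ω * t / 2) *
          (Real.sin (ω * t) * X₁ a + Real.cos (ω * t) * X₂ a) : ℝ) : ℂ)) ∂μ)
      = ((Real.exp (-16 * (g ^ 2 / ω ^ 2) * s * Real.sin (ω * t / 2) ^ 2) : ℝ) : ℂ) := by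
  have m₁ : AEMeasurable X₁ μ := by
    have : NeZero (μ.map X₁) := by rw [h₁]; exact gaussian_neZero_aux _
    exact aemeasurable_of_map_neZero this
  have m₂ : AEMeasurable X₂ μ := by
    have : NeZero (μ.map X₂) := by rw [h₂]; exact gaussian_neZero_aux _
    exact aemeasurable_of_map_neZero this
  set c : ℝ := 4 * Real.sqrt 2 * (g / ω) * Real.sin (ω * t / 2) with hc
  have e₁ := gaussian_phase_aux μ X₁ s hs.le m₁ h₁ (c * Real.sin (ω * t))
  have e₂ := gaussian_phase_aux μ X₂ s hs.le m₂ h₂ (c * Real.cos (ω * t))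
  have hmul := hindep.integral_fun_comp_mul_comp (𝕜 := ℂ)
    (f := fun x : ℝ => Complex.exp (((c * Real.sin (ω * t) : ℝ) : ℂ) * (x : ℂ) * Complex.I))
    (g := fun x : ℝ => Complex.exp (((c * Real.cos (ω * t) : ℝ) : ℂ) * (x : ℂ) * Complex.I))
    m₁ m₂ (by fun_prop) (by fun_prop)
  rw [e₁, e₂, ← Complex.exp_add] at hmul
  have hint : ∀ a, Complex.exp (Complex.I *
      ((c * (Real.sin (ω * t) * X₁ a + Real.cos (ω * t) * X₂ a) : ℝ) : ℂ)) =
      Complex.exp (((c * Real.sin (ω * t) : ℝ) : ℂ) * (X₁ a : ℂ) * Complex.I) *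
      Complex.exp (((c * Real.cos (ω * t) : ℝ) : ℂ) * (X₂ a : ℂ) * Complex.I) := by
    intro a
    rw [← Complex.exp_add]
    congr 1
    push_cast
    ring
  simp_rw [hint]
  rw [hmul, Complex.ofReal_exp]
  congr 1
  norm_cast
  have h2 : Real.sqrt 2 ^ 2 = 2 := Real.sq_sqrt (by norm_num)
  have hc2 : c ^ 2 = 32 * (g ^ 2 / ω ^ 2) * Real.sin (ω * t / 2) ^ 2 := by
    rw [hc, mul_pow, mul_pow, mul_pow, h2, div_pow]
    norm_num
  have hsc := Real.sin_sq_add_cos_sq (ω * t)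
  have key : -(s * (c * Real.sin (ω * t)) ^ 2 / 2) + -(s * (c * Real.cos (ω * t)) ^ 2 / 2)
      = -16 * (g ^ 2 / ω ^ 2) * s * Real.sin (ω * t / 2) ^ 2 := by
    linear_combination (-(s * c ^ 2 / 2)) * hsc - s / 2 * hc2
  exact_mod_cast key
end

section
/- Let ω > 0, β > 0, g ∈ ℝ, and set n_c = 1/(βω). For all t, τ ∈ ℝ, ∫∫_{ℝ²} (βω/(2π)) · exp(−(βω/2)(x₀² + p₀²)) · exp(−2√2·i·(g/ω)·[x₀·(sin(ω(t+τ)) − sin(ωt)) + p₀·(cos(ωt) − cos(ω(t+τ)))]) dx₀ dp₀ = exp(−16·n_c·(g²/ω²)·sin²(ωτ/2)). In particular the averaged phase factor ⟨e^{i(φ(t+τ)−φ(t))}⟩ does not depend on t, so the random unitary channel of semi-classical model 1 is time-translation invariant: L_{0→τ} = L_{t→t+τ} for all t. -/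
open Real MeasureTheory

lemma gauss_char_two (b u v : ℝ) (hb : 0 < b) :
    (∫ x : ℝ, ∫ p : ℝ, ((b / π * Real.exp (-b * (x ^ 2 + p ^ 2)) : ℝ) : ℂ) *
      Complex.exp (Complex.I * ((u * x + v * p : ℝ) : ℂ)))
      = ((Real.exp (-(u ^ 2 + v ^ 2) / (4 * b)) : ℝ) : ℂ) := by
  have hbr : 0 < (b : ℂ).re := by simpa using hb
  have hpt : ∀ x p : ℝ, ((b / π * Real.exp (-b * (x ^ 2 + p ^ 2)) : ℝ) : ℂ) *
      Complex.exp (Complex.I * ((u * x + v * p : ℝ) : ℂ)) =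
      ((b / π : ℂ) * (Complex.exp (Complex.I * u * x) * Complex.exp (-(b : ℂ) * x ^ 2))) *
        (Complex.exp (Complex.I * v * p) * Complex.exp (-(b : ℂ) * p ^ 2)) := by
    intro x p
    push_cast
    rw [mul_assoc, mul_assoc, ← Complex.exp_add, ← Complex.exp_add, ← Complex.exp_add,
      ← Complex.exp_add]
    congr 2
    ring
  simp_rw [hpt, integral_const_mul, integral_mul_const, integral_const_mul,
    fourierIntegral_gaussian hbr]
  have hne : (π / b : ℂ) ≠ 0 := by
    have : (π : ℂ) ≠ 0 := by exact_mod_cast Real.pi_ne_zero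
    have : (b : ℂ) ≠ 0 := by exact_mod_cast hb.ne'
    positivity
  have hsq : ((π / b : ℂ) ^ (1 / 2 : ℂ)) * ((π / b : ℂ) ^ (1 / 2 : ℂ)) = π / b := by
    rw [← Complex.cpow_add _ _ hne]
    norm_num
  have hone : (b / π : ℂ) * (π / b) = 1 := by
    rw [← inv_div (π : ℂ) b, inv_mul_cancel₀ hne]
  calc _ = (b / π : ℂ) * (((π / b : ℂ) ^ (1 / 2 : ℂ)) * ((π / b : ℂ) ^ (1 / 2 : ℂ))) *
        (Complex.exp (-(u : ℂ) ^ 2 / (4 * b)) * Complex.exp (-(v : ℂ) ^ 2 / (4 * b))) := by ring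
    _ = _ := by
      rw [hsq, hone, one_mul, ← Complex.exp_add]
      push_cast
      congr 1
      ring

/-- Time-translation invariance of the random unitary channel of semi-classical
model 1: the thermally averaged phase factor `⟨e^{i(φ(t+τ)−φ(t))}⟩` equals
`exp(−16 n_c (g²/ω²) sin²(ωτ/2))` for all `t`, hence depends only on `τ`,
so that `L_{0→τ} = L_{t→t+τ}`. -/
theorem time_translation_invariance_model1
    (ω β g : ℝ) (hω : 0 < ω) (hβ : 0 < β) (t τ : ℝ) :
    (∫ x₀ : ℝ, ∫ p₀ : ℝ,
        ((β * ω / (2 * π) * Real.exp (-(β * ω / 2) * (x₀ ^ 2 + p₀ ^ 2)) : ℝ) : ℂ) *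
          Complex.exp (Complex.I *
            ((-(2 * Real.sqrt 2) * (g / ω) *
              (x₀ * (Real.sin (ω * (t + τ)) - Real.sin (ω * t)) +
                p₀ * (Real.cos (ω * t) - Real.cos (ω * (t + τ)))) : ℝ) : ℂ)))
      = ((Real.exp (-16 * (1 / (β * ω)) * (g ^ 2 / ω ^ 2) * Real.sin (ω * τ / 2) ^ 2) : ℝ) : ℂ) := by
  have h := gauss_char_two (β * ω / 2)
    (-(2 * Real.sqrt 2) * (g / ω) * (Real.sin (ω * (t + τ)) - Real.sin (ω * t)))
    (-(2 * Real.sqrt 2) * (g / ω) * (Real.cos (ω * t) - Real.cos (ω * (t + τ)))) (by positivity)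
  have key : (Real.sin (ω * (t + τ)) - Real.sin (ω * t)) ^ 2 +
      (Real.cos (ω * t) - Real.cos (ω * (t + τ))) ^ 2 = 4 * Real.sin (ω * τ / 2) ^ 2 := by
    have h1 : Real.cos (ω * τ) = 1 - 2 * Real.sin (ω * τ / 2) ^ 2 := by
      have := Real.cos_two_mul (ω * τ / 2)
      rw [Real.cos_sq', show 2 * (ω * τ / 2) = ω * τ by ring] at this
      linarith
    have h2 := Real.cos_sub (ω * (t + τ)) (ω * t)
    rw [show ω * (t + τ) - ω * t = ω * τ by ring, h1] at h2
    nlinarith [Real.sin_sq_add_cos_sq (ω * (t + τ)), Real.sin_sq_add_cos_sq (ω * t)]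
  have hs : Real.sqrt 2 ^ 2 = 2 := Real.sq_sqrt (by norm_num)
  convert h using 2
  · funext x
    congr 1
    funext p
    congr 3
    · ring
    · congr 1
      ring
  · congr 1
    rw [mul_pow _ (Real.sin _ - _), mul_pow _ (Real.cos _ - _), ← mul_add, key]
    simp only [mul_pow, neg_sq, hs]
    field_simp
    ring
end

section
/- Let λ ∈ ℝ and set N = π·(1 + exp(−8λ²)). Define W(Q,P) = (2/N)·exp(−2P² − 2Q²)·(exp(−8λ²)·cosh(8Qλ) + cos(8Pλ)) and the Wigner negativity δ(W) = ∫∫_{ℝ²} |W(Q,P)| dQ dP − 1. Then δ(W) ≤ tanh(4λ²) ≤ 4λ². In particular, for coupling λ ≪ 1 the non-classicality of the oscillator state produced in the experiment is at most of order 4λ², even when the oscillator begins in its ground state. -/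
open Real MeasureTheory

/-- The ground-state (`ñ = 0`) Wigner function of the oscillator at half a mechanical
period, `W(Q,P) = (2/N) e^{−2P²−2Q²}(e^{−8λ²} cosh(8Qλ) + cos(8Pλ))` with
`N = π(1 + exp(−8λ²))`. -/
noncomputable def groundWigner (l Q P : ℝ) : ℝ :=
  (2 / (π * (1 + Real.exp (-8 * l ^ 2)))) * Real.exp (-2 * P ^ 2 - 2 * Q ^ 2) *
    (Real.exp (-8 * l ^ 2) * Real.cosh (8 * Q * l) + Real.cos (8 * P * l))

/-- Half the sum of two shifted Gaussians plus a centred one. -/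
noncomputable def outerBound (l Q : ℝ) : ℝ :=
  (Real.exp (-2 * (Q - 2 * l) ^ 2) + Real.exp (-2 * (Q + 2 * l) ^ 2)) / 2 + Real.exp (-2 * Q ^ 2)

theorem outerBound_eq (l Q : ℝ) : outerBound l Q =
    Real.exp (-2 * Q ^ 2) * (Real.exp (-8 * l ^ 2) * Real.cosh (8 * Q * l) + 1) := by
  have h1 : Real.exp (-2 * (Q - 2 * l) ^ 2)
      = Real.exp (-2 * Q ^ 2) * Real.exp (-8 * l ^ 2) * Real.exp (8 * Q * l) := by
    rw [← Real.exp_add, ← Real.exp_add]; congr 1; ring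
  have h2 : Real.exp (-2 * (Q + 2 * l) ^ 2)
      = Real.exp (-2 * Q ^ 2) * Real.exp (-8 * l ^ 2) * Real.exp (-(8 * Q * l)) := by
    rw [← Real.exp_add, ← Real.exp_add]; congr 1; ring
  rw [outerBound, h1, h2, Real.cosh_eq]; ring

theorem gauss_integrable : Integrable (fun Q : ℝ => Real.exp (-2 * Q ^ 2)) :=
  integrable_exp_neg_mul_sq (by norm_num)

theorem outerBound_integrable (l : ℝ) : Integrable (outerBound l) :=
  (((gauss_integrable.comp_sub_right (2 * l)).add
    (gauss_integrable.comp_add_right (2 * l))).div_const 2).add gauss_integrable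

theorem outerBound_integral (l : ℝ) : ∫ Q, outerBound l Q = 2 * √(π / 2) := by
  have g1 := gauss_integrable.comp_sub_right (2 * l)
  have g2 := gauss_integrable.comp_add_right (2 * l)
  have e0 := integral_gaussian 2
  have e1 := integral_sub_right_eq_self (μ := volume) (fun Q : ℝ => Real.exp (-2 * Q ^ 2)) (2 * l)
  have e2 := integral_add_right_eq_self (μ := volume) (fun Q : ℝ => Real.exp (-2 * Q ^ 2)) (2 * l)
  have g3 : Integrable (fun Q : ℝ =>
      (Real.exp (-2 * (Q - 2 * l) ^ 2) + Real.exp (-2 * (Q + 2 * l) ^ 2)) / 2) :=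
    (g1.add g2).div_const 2
  unfold outerBound
  rw [integral_add g3 gauss_integrable, integral_div, integral_add g1 g2,
    e1, e2, e0]
  ring

theorem tanh_le_self_aux {x : ℝ} (hx : 0 ≤ x) : Real.tanh x ≤ x := by
  rw [Real.tanh_eq_sinh_div_cosh, div_le_iff₀ (Real.cosh_pos x)]
  have hm : MonotoneOn (fun y : ℝ => y * Real.cosh y - Real.sinh y) (Set.Ici 0) := by
    apply monotoneOn_of_deriv_nonneg (convex_Ici 0)
    · fun_prop
    · fun_prop
    · intro y hy
      rw [interior_Ici] at hy
      have : HasDerivAt (fun y : ℝ => y * Real.cosh y - Real.sinh y)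
          (1 * Real.cosh y + y * Real.sinh y - Real.cosh y) y :=
        ((hasDerivAt_id y).mul (Real.hasDerivAt_cosh y)).sub (Real.hasDerivAt_sinh y)
      rw [this.deriv]
      have h1 : 0 ≤ y * Real.sinh y := mul_nonneg hy.le (Real.sinh_nonneg_iff.2 hy.le)
      linarith
  have := hm (Set.mem_Ici.2 le_rfl) (Set.mem_Ici.2 hx) hx
  simp at this
  linarith

theorem inner_bound (l Q : ℝ) : ∫ P : ℝ, |groundWigner l Q P| ≤
    (2 / (π * (1 + Real.exp (-8 * l ^ 2)))) * √(π / 2) * outerBound l Q := by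
  have e0 := integral_gaussian 2
  have hN : 0 ≤ 2 / (π * (1 + Real.exp (-8 * l ^ 2))) := by positivity
  calc ∫ P : ℝ, |groundWigner l Q P|
      ≤ ∫ P : ℝ, (2 / (π * (1 + Real.exp (-8 * l ^ 2)))) * outerBound l Q
          * Real.exp (-2 * P ^ 2) := by
        apply integral_mono_of_nonneg
        · exact Filter.Eventually.of_forall fun P => abs_nonneg _
        · exact gauss_integrable.const_mul _
        · refine Filter.Eventually.of_forall fun P => ?_
          have hc := Real.cosh_pos (8 * Q * l)
          have he : Real.exp (-2 * P ^ 2 - 2 * Q ^ 2)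
              = Real.exp (-2 * P ^ 2) * Real.exp (-2 * Q ^ 2) := by
            rw [← Real.exp_add]; congr 1; ring
          have hb : |Real.exp (-8 * l ^ 2) * Real.cosh (8 * Q * l) + Real.cos (8 * P * l)|
              ≤ Real.exp (-8 * l ^ 2) * Real.cosh (8 * Q * l) + 1 := by
            refine (abs_add_le _ _).trans (add_le_add (le_of_eq ?_) (Real.abs_cos_le_one _))
            exact abs_of_nonneg (by positivity)
          have hp : 0 ≤ 2 / (π * (1 + Real.exp (-8 * l ^ 2)))
              * Real.exp (-2 * P ^ 2 - 2 * Q ^ 2) := by positivity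
          change |groundWigner l Q P| ≤ _
          rw [groundWigner, abs_mul, abs_of_nonneg hp, outerBound_eq]
          refine (mul_le_mul_of_nonneg_left hb hp).trans (le_of_eq ?_)
          rw [he]; ring
    _ = _ := by rw [integral_const_mul, e0]; ring

/-- The Wigner negativity `δ(W) = ∫∫ |W| dQ dP − 1` of the ground-state oscillator at
half a mechanical period is bounded by `tanh(4λ²) ≤ 4λ²`: for small coupling `λ` the
non-classicality is at most of order `4λ²`, even starting from the ground state. -/
theorem wigner_negativity_le (l : ℝ) :
    (∫ Q : ℝ, ∫ P : ℝ, |groundWigner l Q P|) - 1 ≤ Real.tanh (4 * l ^ 2) ∧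
    Real.tanh (4 * l ^ 2) ≤ 4 * l ^ 2 := by
  refine ⟨?_, tanh_le_self_aux (by positivity)⟩
  have h : ∫ Q : ℝ, ∫ P : ℝ, |groundWigner l Q P| ≤
      ∫ Q : ℝ, (2 / (π * (1 + Real.exp (-8 * l ^ 2)))) * √(π / 2) * outerBound l Q := by
    apply integral_mono_of_nonneg
    · exact Filter.Eventually.of_forall fun Q => integral_nonneg fun P => abs_nonneg _
    · exact (outerBound_integrable l).const_mul _
    · exact Filter.Eventually.of_forall fun Q => inner_bound l Q
  rw [integral_const_mul, outerBound_integral] at h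
  have hs : √(π / 2) * √(π / 2) = π / 2 := Real.mul_self_sqrt (by positivity)
  have hv : 2 / (π * (1 + Real.exp (-8 * l ^ 2))) * √(π / 2) * (2 * √(π / 2))
      = 2 / (1 + Real.exp (-8 * l ^ 2)) := by
    calc _ = 2 / (π * (1 + Real.exp (-8 * l ^ 2))) * 2 * (√(π / 2) * √(π / 2)) := by ring
      _ = _ := by
        rw [hs]
        have := Real.pi_pos
        field_simp
  have ht : Real.tanh (4 * l ^ 2) = 2 / (1 + Real.exp (-8 * l ^ 2)) - 1 := by
    have he : Real.exp (-8 * l ^ 2) = Real.exp (-(4 * l ^ 2)) * Real.exp (-(4 * l ^ 2)) := by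
      rw [← Real.exp_add]; congr 1; ring
    have hi : Real.exp (4 * l ^ 2) * Real.exp (-(4 * l ^ 2)) = 1 := by
      rw [← Real.exp_add]; simp
    rw [Real.tanh_eq_sinh_div_cosh, Real.sinh_eq, Real.cosh_eq, he]
    generalize hA : Real.exp (4 * l ^ 2) = a at *
    generalize hB : Real.exp (-(4 * l ^ 2)) = b at *
    have ha : 0 < a := hA ▸ Real.exp_pos _
    have hb : 0 < b := hB ▸ Real.exp_pos _
    rw [eq_sub_iff_add_eq, div_add_one (by positivity), div_eq_div_iff (by positivity) (by positivity)]
    linear_combination b * hi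
  rw [hv] at h
  linarith
end
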